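/- arXiv:2112.13919 — 3 statements merged into one kernel-verified Lean document; each statement's English description precedes it below -/
import Mathlib

section
/- Let P(x,y) = ∏_{i=1}^r (α_i x + β_i y) and Q(x,y) = ∏_{j=1}^r (γ_j x + δ_j y) be binary forms of degree r ≥ 1 with complex coefficients, and set C = min_{i,j} |α_i δ_j − β_i γ_j| / max_{i,j} max(|α_i| + |γ_j|, |β_i| + |δ_j|). Suppose P and Q have no linear factor in common, so that C > 0. Then for all pairs (a,b) ∈ ℂ², max(|P(a,b)|, |Q(a,b)|) ≥ C^r · H(a,b)^r. -/
/-!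
Cramer's rule expresses `(αδ - βγ) a` and `(αδ - βγ) b` as combinations of the values at `(a, b)` of
`L = αx + βy` and `M = γx + δy`, so one of `|L(a, b)|`, `|M(a, b)|` is at least `C · H(a, b)`. If
some factor of `P` is smaller than this at `(a, b)`, pairing that factor with each factor of `Q`
shows that no factor of `Q` is.
-/

section PairOfLinearForms

lemma norm_mul_sub_mul_le {R : Type*} [NonUnitalSeminormedRing R] (u v x y : R) :
    ‖u * x - v * y‖ ≤ (‖u‖ + ‖v‖) * max ‖x‖ ‖y‖ :=
  calc
    ‖u * x - v * y‖ ≤ ‖u * x‖ + ‖v * y‖ := norm_sub_le _ _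
    _ ≤ ‖u‖ * ‖x‖ + ‖v‖ * ‖y‖ := add_le_add (norm_mul_le _ _) (norm_mul_le _ _)
    _ ≤ ‖u‖ * max ‖x‖ ‖y‖ + ‖v‖ * max ‖x‖ ‖y‖ := by
      gcongr
      exacts [le_max_left _ _, le_max_right _ _]
    _ = (‖u‖ + ‖v‖) * max ‖x‖ ‖y‖ := (add_mul _ _ _).symm

lemma norm_det_mul_max_le {R : Type*} [SeminormedCommRing R] [NormMulClass R] (α β γ δ a b : R) :
    ‖α * δ - β * γ‖ * max ‖a‖ ‖b‖ ≤
      max (‖α‖ + ‖γ‖) (‖β‖ + ‖δ‖) * max ‖α * a + β * b‖ ‖γ * a + δ * b‖ := by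
  have cramer_left : (α * δ - β * γ) * a = δ * (α * a + β * b) - β * (γ * a + δ * b) := by ring
  have cramer_right : (α * δ - β * γ) * b = α * (γ * a + δ * b) - γ * (α * a + β * b) := by ring
  rw [mul_max_of_nonneg _ _ (norm_nonneg _), ← norm_mul, ← norm_mul]
  refine max_le ?_ ?_
  · rw [cramer_left]
    refine (norm_mul_sub_mul_le _ _ _ _).trans ?_
    rw [add_comm ‖δ‖]
    gcongr
    exact le_max_right _ _
  · rw [cramer_right]
    refine (norm_mul_sub_mul_le _ _ _ _).trans ?_
    rw [max_comm ‖γ * a + δ * b‖]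
    gcongr
    exact le_max_left _ _

lemma max_norm_add_norm_pos_of_det_ne_zero {R : Type*} [NormedCommRing R] {α β γ δ : R}
    (h : α * δ - β * γ ≠ 0) : 0 < max (‖α‖ + ‖γ‖) (‖β‖ + ‖δ‖) := by
  have hαβ : α ≠ 0 ∨ β ≠ 0 := by
    by_contra! h₀
    exact h (by simp [h₀])
  rcases hαβ with hα | hβ
  · exact lt_max_of_lt_left (add_pos_of_pos_of_nonneg (norm_pos_iff.2 hα) (norm_nonneg γ))
  · exact lt_max_of_lt_right (add_pos_of_pos_of_nonneg (norm_pos_iff.2 hβ) (norm_nonneg δ))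

end PairOfLinearForms

lemma pow_card_le_prod_of_nonneg {ι R : Type*} [CommMonoidWithZero R] [PartialOrder R]
    [ZeroLEOneClass R] [PosMulMono R] {s : Finset ι} {f : ι → R} {c : R} (hc : 0 ≤ c)
    (h : ∀ i ∈ s, c ≤ f i) : c ^ s.card ≤ ∏ i ∈ s, f i :=
  (Finset.prod_const c).symm.trans_le (Finset.prod_le_prod (fun _ _ => hc) h)

lemma min_pow_card_le_max_prod {ι κ R : Type*} [CommMonoidWithZero R] [LinearOrder R]
    [ZeroLEOneClass R] [PosMulMono R] {s : Finset ι} {t : Finset κ} {f : ι → R} {g : κ → R} {c : R}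
    (hc : 0 ≤ c) (h : ∀ i ∈ s, ∀ j ∈ t, c ≤ max (f i) (g j)) :
    min (c ^ s.card) (c ^ t.card) ≤ max (∏ i ∈ s, f i) (∏ j ∈ t, g j) := by
  by_cases hf : ∀ i ∈ s, c ≤ f i
  · exact min_le_of_left_le (le_max_of_le_left (pow_card_le_prod_of_nonneg hc hf))
  · push Not at hf
    obtain ⟨i, hi, hfi⟩ := hf
    have hg : ∀ j ∈ t, c ≤ g j := fun j hj => (le_max_iff.1 (h i hi j hj)).resolve_left hfi.not_ge
    exact min_le_of_right_le (le_max_of_le_right (pow_card_le_prod_of_nonneg hc hg))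

section SeparationConstant

variable {ι κ R : Type*} [NormedCommRing R]

/-- The numerator of the constant `C` for the families of linear forms `A i * x + B i * y` and
`Γ j * x + Δ j * y`: the least norm of a determinant `A i * Δ j - B i * Γ j`. It is written as an
infimum, which is attained for finite nonempty index types. -/
noncomputable def minNormDet (A B : ι → R) (Γ Δ : κ → R) : ℝ :=
  ⨅ p : ι × κ, ‖A p.1 * Δ p.2 - B p.1 * Γ p.2‖

/-- The denominator of the constant `C` for the families of linear forms `A i * x + B i * y` and
`Γ j * x + Δ j * y`: the largest column sum of norms among their `2 × 2` coefficient matrices. It is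
written as a supremum, which is attained for finite nonempty index types. -/
noncomputable def maxColumnSum (A B : ι → R) (Γ Δ : κ → R) : ℝ :=
  ⨆ p : ι × κ, max (‖A p.1‖ + ‖Γ p.2‖) (‖B p.1‖ + ‖Δ p.2‖)

/-- The constant `C` for the families of linear forms `A i * x + B i * y` and `Γ j * x + Δ j * y`,
which measures how far the two families are from having a common factor. -/
noncomputable def separationConstant (A B : ι → R) (Γ Δ : κ → R) : ℝ :=
  minNormDet A B Γ Δ / maxColumnSum A B Γ Δ

lemma minNormDet_le (A B : ι → R) (Γ Δ : κ → R) (i : ι) (j : κ) :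
    minNormDet A B Γ Δ ≤ ‖A i * Δ j - B i * Γ j‖ :=
  ciInf_le (f := fun p : ι × κ => ‖A p.1 * Δ p.2 - B p.1 * Γ p.2‖)
    ⟨0, Set.forall_mem_range.2 fun _ => norm_nonneg _⟩ (i, j)

lemma minNormDet_pos [Finite ι] [Finite κ] [Nonempty ι] [Nonempty κ] {A B : ι → R} {Γ Δ : κ → R}
    (hnc : ∀ i j, A i * Δ j - B i * Γ j ≠ 0) : 0 < minNormDet A B Γ Δ := by
  obtain ⟨⟨i, j⟩, hmin⟩ :=
    exists_eq_ciInf_of_finite (f := fun p : ι × κ => ‖A p.1 * Δ p.2 - B p.1 * Γ p.2‖)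
  exact (norm_pos_iff.2 (hnc i j)).trans_eq hmin

lemma le_maxColumnSum [Finite ι] [Finite κ] (A B : ι → R) (Γ Δ : κ → R) (i : ι) (j : κ) :
    max (‖A i‖ + ‖Γ j‖) (‖B i‖ + ‖Δ j‖) ≤ maxColumnSum A B Γ Δ :=
  le_ciSup (f := fun p : ι × κ => max (‖A p.1‖ + ‖Γ p.2‖) (‖B p.1‖ + ‖Δ p.2‖))
    (Set.finite_range _).bddAbove (i, j)

lemma separationConstant_pos [Finite ι] [Finite κ] [Nonempty ι] [Nonempty κ]
    {A B : ι → R} {Γ Δ : κ → R} (hnc : ∀ i j, A i * Δ j - B i * Γ j ≠ 0) :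
    0 < separationConstant A B Γ Δ := by
  obtain ⟨i⟩ := ‹Nonempty ι›
  obtain ⟨j⟩ := ‹Nonempty κ›
  have hsum : 0 < maxColumnSum A B Γ Δ :=
    (max_norm_add_norm_pos_of_det_ne_zero (hnc i j)).trans_le (le_maxColumnSum A B Γ Δ i j)
  exact div_pos (minNormDet_pos hnc) hsum

lemma separationConstant_mul_max_le [Finite ι] [Finite κ] [NormMulClass R]
    (A B : ι → R) (Γ Δ : κ → R) (a b : R) (i : ι) (j : κ) :
    separationConstant A B Γ Δ * max ‖a‖ ‖b‖ ≤ max ‖A i * a + B i * b‖ ‖Γ j * a + Δ j * b‖ := by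
  have hsum : 0 ≤ maxColumnSum A B Γ Δ :=
    le_trans (by positivity) (le_maxColumnSum A B Γ Δ i j)
  rw [separationConstant, div_mul_eq_mul_div]
  refine div_le_of_le_mul₀ hsum (by positivity) ?_
  rw [mul_comm _ (maxColumnSum A B Γ Δ)]
  calc
    minNormDet A B Γ Δ * max ‖a‖ ‖b‖ ≤ ‖A i * Δ j - B i * Γ j‖ * max ‖a‖ ‖b‖ := by
      gcongr
      exact minNormDet_le A B Γ Δ i j
    _ ≤ max (‖A i‖ + ‖Γ j‖) (‖B i‖ + ‖Δ j‖) * max ‖A i * a + B i * b‖ ‖Γ j * a + Δ j * b‖ :=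
      norm_det_mul_max_le _ _ _ _ _ _
    _ ≤ maxColumnSum A B Γ Δ * max ‖A i * a + B i * b‖ ‖Γ j * a + Δ j * b‖ := by
      gcongr
      exact le_maxColumnSum A B Γ Δ i j

theorem two_forms_lower_bound_general [Fintype ι] [Fintype κ] [Nonempty ι] [Nonempty κ]
    [NormMulClass R] (A B : ι → R) (Γ Δ : κ → R)
    (hnc : ∀ i j, A i * Δ j - B i * Γ j ≠ 0) :
    0 < separationConstant A B Γ Δ ∧
      ∀ a b : R,
        min ((separationConstant A B Γ Δ * max ‖a‖ ‖b‖) ^ Fintype.card ι)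
            ((separationConstant A B Γ Δ * max ‖a‖ ‖b‖) ^ Fintype.card κ) ≤
          max ‖∏ i, (A i * a + B i * b)‖ ‖∏ j, (Γ j * a + Δ j * b)‖ := by
  have hC := separationConstant_pos hnc
  have : Nontrivial R :=
    nontrivial_of_ne _ _ (hnc (Classical.arbitrary ι) (Classical.arbitrary κ))
  have : NormOneClass R := NormMulClass.toNormOneClass
  refine ⟨hC, fun a b => ?_⟩
  rw [norm_prod, norm_prod]
  exact min_pow_card_le_max_prod (by positivity)
    fun i _ j _ => separationConstant_mul_max_le A B Γ Δ a b i j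

end SeparationConstant

/-- Let `P(x,y) = ∏ᵢ (αᵢ x + βᵢ y)` and `Q(x,y) = ∏ⱼ (γⱼ x + δⱼ y)` be binary forms
of degree `r ≥ 1` with complex coefficients, and set
`C = minᵢⱼ |αᵢ δⱼ − βᵢ γⱼ| / maxᵢⱼ max (|αᵢ| + |γⱼ|, |βᵢ| + |δⱼ|)`. Suppose `P` and
`Q` have no linear factor in common (`αᵢ δⱼ − βᵢ γⱼ ≠ 0` for all `i, j`), so that
`C > 0`. Then for all `(a, b) ∈ ℂ²`,
`max (|P(a,b)|, |Q(a,b)|) ≥ C^r · H(a,b)^r`, where `H(a,b) = max (|a|, |b|)`. -/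
theorem two_forms_lower_bound
    (r : ℕ) (hr : 1 ≤ r) (A B Γ Δ : Fin r → ℂ)
    (hnc : ∀ i j : Fin r, A i * Δ j - B i * Γ j ≠ 0)
    (C : ℝ)
    (hC : C = (⨅ p : Fin r × Fin r, ‖A p.1 * Δ p.2 - B p.1 * Γ p.2‖) /
      (⨆ p : Fin r × Fin r, max (‖A p.1‖ + ‖Γ p.2‖) (‖B p.1‖ + ‖Δ p.2‖))) :
    0 < C ∧
      ∀ a b : ℂ,
        C ^ r * (max ‖a‖ ‖b‖) ^ r ≤
          max ‖∏ i : Fin r, (A i * a + B i * b)‖ ‖∏ j : Fin r, (Γ j * a + Δ j * b)‖ := by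
  have : NeZero r := ⟨by lia⟩
  simpa [hC, separationConstant, minNormDet, maxColumnSum, mul_pow] using
    two_forms_lower_bound_general A B Γ Δ hnc
end

section
/- Let P, Q ∈ ℤ[x] be coprime polynomials of degrees r and s respectively, with r ≥ max(1, s), and set P(x,y) = y^r·P(x/y) and Q(x,y) = y^r·Q(x/y) (the degree-r homogenizations). Then for all pairs (a,b) ∈ ℂ², max(|P(a,b)|, |Q(a,b)|) ≥ H(a,b)^r / (2^{r²} · (r+1)^{3r²/2} · max(H(P), H(Q))^{2r² + r}). -/
open Polynomial

/-- The height `H(P)` of an integer polynomial: the maximum of the absolute values of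
its coefficients (as a natural number; `H(0) = 0`). -/
def polyHeight (P : Polynomial ℤ) : ℕ := P.support.sup fun i => (P.coeff i).natAbs

/-- The degree-`r` homogenization of an integer polynomial, evaluated at a complex
point `(a, b)`: if `P(x) = ∑ cᵢ xⁱ`, this is `∑_{i ≤ r} cᵢ aⁱ b^(r−i)`,
i.e. `b^r · P(a/b)`. -/
noncomputable def homogEvalC (P : Polynomial ℤ) (r : ℕ) (a b : ℂ) : ℂ :=
  ∑ i ∈ Finset.range (r + 1), (P.coeff i : ℂ) * a ^ i * b ^ (r - i)

/-!
The monomials `a ^ i * b ^ (2 * r - 1 - i)`, collected in a row vector and multiplied by the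
Sylvester matrix of `P` and `Q`, give the values `P(a, b)` and `Q(a, b)` times the monomials of
degree `r - 1`. By coprimality the determinant of that matrix, the resultant, is a nonzero integer,
hence of absolute value at least `1`. Each column has `ℓ¹`-norm at most `(r + 1) M`, where
`M = max (H(P), H(Q))`, so the cofactors are at most `((r + 1) M) ^ (2 * r - 1)`. Cramer's rule,
applied at the monomial of largest absolute value, gives
`H(a, b) ^ (2 * r - 1) ≤
  2 * r * ((r + 1) M) ^ (2 * r - 1) * H(a, b) ^ (r - 1) * max (|P(a, b)|, |Q(a, b)|)`,
and this constant is smaller than the one claimed.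
-/

section Matrix

variable {n R : Type*} [Fintype n] [DecidableEq n] [NormedCommRing R] [NormOneClass R]

theorem norm_det_le_prod_sum_norm (A : Matrix n n R) : ‖A.det‖ ≤ ∏ j, ∑ i, ‖A i j‖ := by
  calc ‖A.det‖ ≤ ∑ σ : Equiv.Perm n, ∏ j, ‖A (σ j) j‖ := by
        rw [Matrix.det_apply]
        refine norm_sum_le_of_le _ fun σ _ => ?_
        have hsign : ‖Equiv.Perm.sign σ • ∏ j, A (σ j) j‖ = ‖∏ j, A (σ j) j‖ := by
          rcases Int.units_eq_one_or (Equiv.Perm.sign σ) with h | h <;> simp [h]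
        exact hsign.trans_le (Finset.norm_prod_le _ fun j => A (σ j) j)
    -- Enlarging the sum from permutations to all maps makes it factor.
    _ ≤ ∑ f : n → n, ∏ j, ‖A (f j) j‖ := by
        let toFun : Equiv.Perm n ↪ (n → n) := ⟨(⇑), DFunLike.coe_injective⟩
        exact (Finset.sum_map Finset.univ toFun fun f => ∏ j, ‖A (f j) j‖).symm.trans_le
          (Finset.sum_le_univ_sum_of_nonneg fun f => by positivity)
    _ = ∏ j, ∑ i, ‖A i j‖ := (Fintype.prod_sum fun j i => ‖A i j‖).symm

theorem norm_adjugate_le_prod_sum_norm (A : Matrix n n R) (i j : n) :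
    ‖A.adjugate i j‖ ≤ ∏ k ∈ Finset.univ.erase i, ∑ l, ‖A l k‖ := by
  have hadj : A.adjugate i j = (A.updateCol i (Pi.single j 1)).det := by
    rw [← A.transpose_transpose, ← Matrix.adjugate_transpose, Matrix.transpose_apply,
      Matrix.adjugate_apply, Matrix.updateRow_transpose, Matrix.det_transpose,
      Matrix.transpose_transpose]
  have hcol : ∑ l, ‖A.updateCol i (Pi.single j 1) l i‖ = 1 := by
    simp [Pi.single_apply, apply_ite norm]
  calc ‖A.adjugate i j‖ ≤ ∏ k, ∑ l, ‖A.updateCol i (Pi.single j 1) l k‖ :=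
        hadj ▸ norm_det_le_prod_sum_norm _
    _ = ∏ k ∈ Finset.univ.erase i, ∑ l, ‖A.updateCol i (Pi.single j 1) l k‖ := by
        rw [← Finset.mul_prod_erase _ _ (Finset.mem_univ i), hcol, one_mul]
    _ = ∏ k ∈ Finset.univ.erase i, ∑ l, ‖A l k‖ :=
        Finset.prod_congr rfl fun k hk => by simp [Finset.ne_of_mem_erase hk]

open Matrix in
theorem norm_det_mul_le_of_sum_norm_le {A : Matrix n n R} {L : ℝ} (hA : ∀ k, ∑ l, ‖A l k‖ ≤ L)
    (v : n → R) (j : n) :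
    ‖A.det * v j‖ ≤ L ^ (Fintype.card n - 1) * ∑ i, ‖(v ᵥ* A) i‖ := by
  have hcramer : A.det * v j = ∑ i, (v ᵥ* A) i * A.adjugate i j := by
    have h : (v ᵥ* A) ᵥ* A.adjugate = A.det • v := by
      rw [vecMul_vecMul, mul_adjugate, vecMul_smul, vecMul_one]
    exact (congrFun h j).symm
  have hadj (i : n) : ‖A.adjugate i j‖ ≤ L ^ (Fintype.card n - 1) :=
    calc ‖A.adjugate i j‖ ≤ ∏ k ∈ Finset.univ.erase i, ∑ l, ‖A l k‖ :=
          norm_adjugate_le_prod_sum_norm A i j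
      _ ≤ ∏ _k ∈ Finset.univ.erase i, L :=
          Finset.prod_le_prod (fun _ _ => by positivity) fun k _ => hA k
      _ = L ^ (Fintype.card n - 1) := by simp
  rw [hcramer, Finset.mul_sum]
  refine norm_sum_le_of_le _ fun i _ => (norm_mul_le _ _).trans ?_
  rw [mul_comm]
  gcongr
  exact hadj i

end Matrix

section Sylvester

theorem resultant_ne_zero_of_isRelPrime {R : Type*} [CommRing R] [IsDomain R]
    [DecompositionMonoid R[X]] {f g : R[X]} {n : ℕ} (hfg : IsRelPrime f g) (hf : f ≠ 0)
    (hg : g.natDegree ≤ n) : resultant f g f.natDegree n ≠ 0 := by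
  intro hres
  obtain ⟨v, hv, hSv⟩ := Matrix.exists_mulVec_eq_zero_iff.mpr hres
  let b := ((degreeLT.basis R f.natDegree).prod (degreeLT.basis R n)).reindex finSumFinEquiv
  obtain ⟨⟨⟨p, hp⟩, ⟨q, hq⟩⟩, rfl⟩ := b.equivFun.surjective v
  have hsyl : f * q + g * p = 0 := by
    rw [← toMatrix_sylvesterMap' f g le_rfl hg, Module.Basis.equivFun_apply,
      LinearMap.toMatrix_mulVec_repr] at hSv
    exact congrArg Subtype.val ((degreeLT.basis R _).equivFun.map_eq_zero_iff.mp hSv)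
  have hp0 : p = 0 := by
    refine eq_zero_of_dvd_of_degree_lt (hfg.dvd_of_dvd_mul_left ⟨-q, ?_⟩)
      ((mem_degreeLT.mp hp).trans_eq (degree_eq_natDegree hf).symm)
    linear_combination hsyl
  have hq0 : q = 0 := by simpa [hp0, hf] using hsyl
  subst hp0 hq0
  exact hv (map_zero _)

theorem eval_homogenize_eq_sum {R : Type*} [CommSemiring R] (p : R[X]) (n : ℕ) (a b : R) :
    MvPolynomial.eval ![a, b] (p.homogenize n) =
      ∑ k ∈ Finset.range (n + 1), p.coeff k * a ^ k * b ^ (n - k) := by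
  rw [homogenize, map_sum, Finset.Nat.sum_antidiagonal_eq_sum_range_succ_mk]
  refine Finset.sum_congr rfl fun k _ => ?_
  simp [MvPolynomial.eval_monomial, mul_assoc]

/-- The vector of the `N` monomials `a ^ i * b ^ (N - 1 - i)` of degree `N - 1`, ordered as the
rows of the Sylvester matrix. -/
def monomialVec {R : Type*} [CommSemiring R] (N : ℕ) (a b : R) (i : Fin N) : R :=
  a ^ (i : ℕ) * b ^ (N - 1 - i)

theorem sum_fin_shifted_coeff {R M : Type*} [Semiring R] [AddCommMonoid M] (p : R[X])
    {ψ : ℕ → R → M} (hψ : ∀ i, ψ i 0 = 0) {N j d : ℕ} (h : j + d < N) :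
    ∑ i : Fin N, ψ i (if (i : ℕ) ∈ Set.Icc j (j + d) then p.coeff (i - j) else 0) =
      ∑ k ∈ Finset.range (d + 1), ψ (j + k) (p.coeff k) := by
  have hfilter : {i ∈ Finset.range N | i ∈ Set.Icc j (j + d)} = Finset.Ico j (j + (d + 1)) := by
    ext i
    simp only [Finset.mem_filter, Finset.mem_range, Set.mem_Icc, Finset.mem_Ico]
    lia
  simp only [apply_ite (ψ _), hψ]
  rw [Fin.sum_univ_eq_sum_range
      fun i => if i ∈ Set.Icc j (j + d) then ψ i (p.coeff (i - j)) else 0,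
    ← Finset.sum_filter, hfilter, Finset.sum_Ico_eq_sum_range]
  simp only [Nat.add_sub_cancel_left]

-- The arbitrary `ψ` covers both the `ℓ¹`-norm of a column and its pairing with `monomialVec`.
theorem sum_sylvester_col {R M : Type*} [Semiring R] [AddCommMonoid M] (f g : R[X]) (m n : ℕ)
    {ψ : ℕ → R → M} (hψ : ∀ i, ψ i 0 = 0) :
    (fun j => ∑ i : Fin (m + n), ψ i (sylvester f g m n i j)) =
      Fin.append (fun j : Fin m => ∑ k ∈ Finset.range (n + 1), ψ (j + k) (g.coeff k))
        (fun j : Fin n => ∑ k ∈ Finset.range (m + 1), ψ (j + k) (f.coeff k)) := by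
  ext j
  induction j using Fin.addCases with
  | left j =>
    simp only [sylvester, Matrix.of_apply, Fin.addCases_left, Fin.append_left]
    exact sum_fin_shifted_coeff g hψ (add_lt_add_left j.isLt n)
  | right j =>
    simp only [sylvester, Matrix.of_apply, Fin.addCases_right, Fin.append_right]
    exact sum_fin_shifted_coeff f hψ (by lia : (j : ℕ) + m < m + n)

theorem sum_norm_sylvester_col_le {R : Type*} [SeminormedRing R] {f g : R[X]} {m n : ℕ}
    {L : ℝ} (hf : ∑ k ∈ Finset.range (m + 1), ‖f.coeff k‖ ≤ L)
    (hg : ∑ k ∈ Finset.range (n + 1), ‖g.coeff k‖ ≤ L) (j : Fin (m + n)) :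
    ∑ i, ‖sylvester f g m n i j‖ ≤ L := by
  have hcol := congrFun (sum_sylvester_col f g m n (ψ := fun _ c => ‖c‖) (by simp)) j
  induction j using Fin.addCases with
  | left j => simpa only [hcol, Fin.append_left] using hg
  | right j => simpa only [hcol, Fin.append_right] using hf

theorem sum_monomial_mul_coeff {R : Type*} [CommSemiring R] (p : R[X]) (a b : R) {d e j : ℕ}
    (hj : j < e) :
    ∑ k ∈ Finset.range (d + 1), a ^ (j + k) * b ^ (e + d - 1 - (j + k)) * p.coeff k =
      MvPolynomial.eval ![a, b] (p.homogenize d) * (a ^ j * b ^ (e - 1 - j)) := by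
  rw [eval_homogenize_eq_sum, Finset.sum_mul]
  refine Finset.sum_congr rfl fun k hk => ?_
  rw [show e + d - 1 - (j + k) = (d - k) + (e - 1 - j) by grind, pow_add, pow_add]
  ring

open Matrix in
theorem monomialVec_vecMul_sylvester {R : Type*} [CommSemiring R] (f g : R[X]) (m n : ℕ) (a b : R) :
    monomialVec (m + n) a b ᵥ* sylvester f g m n =
      Fin.append (MvPolynomial.eval ![a, b] (g.homogenize n) • monomialVec m a b)
        (MvPolynomial.eval ![a, b] (f.homogenize m) • monomialVec n a b) := by
  refine (sum_sylvester_col f g m n (ψ := fun i c => a ^ i * b ^ (m + n - 1 - i) * c)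
    (by simp)).trans ?_
  congr 1 <;> ext j
  · exact sum_monomial_mul_coeff g a b j.isLt
  · rw [add_comm m n]
    exact sum_monomial_mul_coeff f a b j.isLt

section Norm

variable {R : Type*} [NormedCommRing R] [NormOneClass R] [NormMulClass R]

theorem norm_monomialVec_le {N : ℕ} (a b : R) (i : Fin N) :
    ‖monomialVec N a b i‖ ≤ max ‖a‖ ‖b‖ ^ (N - 1) := by
  rw [monomialVec, norm_mul, norm_pow, norm_pow]
  calc ‖a‖ ^ (i : ℕ) * ‖b‖ ^ (N - 1 - i)
      ≤ max ‖a‖ ‖b‖ ^ (i : ℕ) * max ‖a‖ ‖b‖ ^ (N - 1 - i) := by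
        gcongr
        exacts [le_max_left _ _, le_max_right _ _]
    _ = max ‖a‖ ‖b‖ ^ (N - 1) := by rw [← pow_add]; congr 1; lia

theorem exists_norm_monomialVec_eq {N : ℕ} (hN : 0 < N) (a b : R) :
    ∃ i, ‖monomialVec N a b i‖ = max ‖a‖ ‖b‖ ^ (N - 1) := by
  rcases le_total ‖a‖ ‖b‖ with h | h
  · exact ⟨⟨0, hN⟩, by simp [monomialVec, max_eq_right h]⟩
  · exact ⟨⟨N - 1, by lia⟩, by simp [monomialVec, max_eq_left h]⟩

open Matrix in
theorem sum_norm_monomialVec_vecMul_sylvester_le (f g : R[X]) (m n : ℕ) (a b : R) :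
    ∑ j, ‖(monomialVec (m + n) a b ᵥ* sylvester f g m n) j‖ ≤
      m * (‖MvPolynomial.eval ![a, b] (g.homogenize n)‖ * max ‖a‖ ‖b‖ ^ (m - 1)) +
        n * (‖MvPolynomial.eval ![a, b] (f.homogenize m)‖ * max ‖a‖ ‖b‖ ^ (n - 1)) := by
  have hsum (c : R) (N : ℕ) :
      ∑ j, ‖(c • monomialVec N a b) j‖ ≤ N * (‖c‖ * max ‖a‖ ‖b‖ ^ (N - 1)) := by
    refine (Finset.sum_le_card_nsmul _ _ (‖c‖ * max ‖a‖ ‖b‖ ^ (N - 1)) fun j _ => ?_).trans_eq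
      (by simp)
    rw [Pi.smul_apply, smul_eq_mul, norm_mul]
    gcongr
    exact norm_monomialVec_le a b j
  rw [monomialVec_vecMul_sylvester, Fin.sum_univ_add]
  simp only [Fin.append_left, Fin.append_right]
  exact add_le_add (hsum _ m) (hsum _ n)

theorem norm_resultant_mul_max_pow_le {f g : R[X]} {m n : ℕ} (hmn : 0 < m + n) {L : ℝ}
    (hf : ∑ k ∈ Finset.range (m + 1), ‖f.coeff k‖ ≤ L)
    (hg : ∑ k ∈ Finset.range (n + 1), ‖g.coeff k‖ ≤ L) (a b : R) :
    ‖resultant f g m n‖ * max ‖a‖ ‖b‖ ^ (m + n - 1) ≤ L ^ (m + n - 1) *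
      (m * (‖MvPolynomial.eval ![a, b] (g.homogenize n)‖ * max ‖a‖ ‖b‖ ^ (m - 1)) +
        n * (‖MvPolynomial.eval ![a, b] (f.homogenize m)‖ * max ‖a‖ ‖b‖ ^ (n - 1))) := by
  obtain ⟨i, hi⟩ := exists_norm_monomialVec_eq hmn a b
  have hL : 0 ≤ L := le_trans (by positivity) hf
  rw [← hi, ← norm_mul]
  refine (norm_det_mul_le_of_sum_norm_le (sum_norm_sylvester_col_le hf hg) _ i).trans ?_
  rw [Fintype.card_fin]
  gcongr
  exact sum_norm_monomialVec_vecMul_sylvester_le f g m n a b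

theorem max_pow_le_of_one_le_norm_resultant {f g : R[X]} {r : ℕ} (hr : 0 < r) {L : ℝ}
    (hf : ∑ k ∈ Finset.range (r + 1), ‖f.coeff k‖ ≤ L)
    (hg : ∑ k ∈ Finset.range (r + 1), ‖g.coeff k‖ ≤ L) (hres : 1 ≤ ‖resultant f g r r‖) (a b : R) :
    max ‖a‖ ‖b‖ ^ r ≤ 2 * r * L ^ (2 * r - 1) *
      max ‖MvPolynomial.eval ![a, b] (f.homogenize r)‖
        ‖MvPolynomial.eval ![a, b] (g.homogenize r)‖ := by
  have hL : 0 ≤ L := le_trans (by positivity) hf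
  have hbound := norm_resultant_mul_max_pow_le (show 0 < r + r by lia) hf hg a b
  set F := ‖MvPolynomial.eval ![a, b] (f.homogenize r)‖
  set G := ‖MvPolynomial.eval ![a, b] (g.homogenize r)‖
  set H := max ‖a‖ ‖b‖
  have hF : 0 ≤ F := norm_nonneg _
  obtain hH | hH : 0 = H ∨ 0 < H := (le_max_of_le_left (norm_nonneg a)).eq_or_lt
  · rw [← hH, zero_pow hr.ne']
    positivity
  rw [← two_mul] at hbound
  refine le_of_mul_le_mul_right ?_ (pow_pos hH (r - 1))
  calc H ^ r * H ^ (r - 1) = H ^ (2 * r - 1) := by rw [← pow_add]; congr 1; lia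
    _ ≤ ‖resultant f g r r‖ * H ^ (2 * r - 1) := le_mul_of_one_le_left (by positivity) hres
    _ ≤ L ^ (2 * r - 1) * (r * (G * H ^ (r - 1)) + r * (F * H ^ (r - 1))) := hbound
    _ ≤ L ^ (2 * r - 1) * (r * (max F G * H ^ (r - 1)) + r * (max F G * H ^ (r - 1))) := by
        gcongr
        exacts [le_max_right _ _, le_max_left _ _]
    _ = 2 * r * L ^ (2 * r - 1) * max F G * H ^ (r - 1) := by ring

end Norm

end Sylvester

section Height

theorem norm_coeff_le_polyHeight (P : ℤ[X]) (k : ℕ) : ‖P.coeff k‖ ≤ polyHeight P := by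
  rw [Int.norm_eq_abs, ← Int.cast_abs, Int.abs_eq_natAbs, Int.cast_natCast]
  by_cases h : k ∈ P.support
  · exact_mod_cast Finset.le_sup (f := fun i => (P.coeff i).natAbs) h
  · simp [notMem_support_iff.mp h]

theorem one_le_polyHeight {P : ℤ[X]} (hP : P ≠ 0) : 1 ≤ polyHeight P := by
  have hdeg := natDegree_mem_support_of_nonzero hP
  exact (Int.natAbs_pos.mpr (mem_support_iff.mp hdeg)).trans_le
    (Finset.le_sup (f := fun i => (P.coeff i).natAbs) hdeg)

theorem sum_norm_coeff_map_le {P : ℤ[X]} {M : ℝ} (hM : polyHeight P ≤ M) (r : ℕ) :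
    ∑ k ∈ Finset.range (r + 1), ‖(P.map (Int.castRingHom ℂ)).coeff k‖ ≤ (r + 1) * M := by
  have hcoeff (k : ℕ) : ‖(P.map (Int.castRingHom ℂ)).coeff k‖ ≤ M := by
    rw [coeff_map, eq_intCast, Complex.norm_intCast, ← Int.norm_eq_abs]
    exact (norm_coeff_le_polyHeight P k).trans hM
  exact (Finset.sum_le_card_nsmul _ _ M fun k _ => hcoeff k).trans_eq (by simp)

theorem homogEvalC_eq_eval_homogenize (P : ℤ[X]) (r : ℕ) (a b : ℂ) :
    homogEvalC P r a b =
      MvPolynomial.eval ![a, b] ((P.map (Int.castRingHom ℂ)).homogenize r) := by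
  simp only [homogEvalC, eval_homogenize_eq_sum, coeff_map, eq_intCast]

theorem one_le_norm_resultant_map {P Q : ℤ[X]} {n : ℕ} (hPQ : IsRelPrime P Q) (hP : P ≠ 0)
    (hQ : Q.natDegree ≤ n) :
    1 ≤ ‖resultant (P.map (Int.castRingHom ℂ)) (Q.map (Int.castRingHom ℂ)) P.natDegree n‖ := by
  rw [resultant_map_map, eq_intCast, Complex.norm_intCast]
  exact_mod_cast Int.one_le_abs (resultant_ne_zero_of_isRelPrime hPQ hP hQ)

theorem max_pow_le_of_isRelPrime {P Q : ℤ[X]} (hPQ : IsRelPrime P Q) (hP : 0 < P.natDegree)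
    (hQ : Q.natDegree ≤ P.natDegree) {M : ℝ} (hPM : polyHeight P ≤ M) (hQM : polyHeight Q ≤ M)
    (a b : ℂ) :
    max ‖a‖ ‖b‖ ^ P.natDegree ≤
      2 * P.natDegree * ((P.natDegree + 1) * M) ^ (2 * P.natDegree - 1) *
        max ‖homogEvalC P P.natDegree a b‖ ‖homogEvalC Q P.natDegree a b‖ := by
  simp only [homogEvalC_eq_eval_homogenize]
  exact max_pow_le_of_one_le_norm_resultant hP (sum_norm_coeff_map_le hPM _)
    (sum_norm_coeff_map_le hQM _)
    (one_le_norm_resultant_map hPQ (ne_zero_of_natDegree_gt hP) hQ) a b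

theorem two_mul_mul_pow_le {r : ℕ} (hr : 0 < r) {M : ℝ} (hM : 1 ≤ M) :
    2 * r * ((r + 1) * M) ^ (2 * r - 1) ≤
      (2 : ℝ) ^ (r ^ 2) * ((r : ℝ) + 1) ^ (3 * (r : ℝ) ^ 2 / 2) * M ^ (2 * r ^ 2 + r) := by
  have htwo : (2 * r : ℝ) ≤ 2 ^ (r ^ 2) := by
    calc (2 * r : ℝ) ≤ 2 * 2 ^ (r - 1) := by
          have := (r - 1).lt_two_pow_self
          gcongr
          exact_mod_cast (by lia : r ≤ 2 ^ (r - 1))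
      _ = 2 ^ r := mul_pow_sub_one hr.ne' 2
      _ ≤ 2 ^ (r ^ 2) := pow_le_pow_right₀ one_le_two (Nat.le_self_pow two_ne_zero r)
  have hsucc : ((r : ℝ) + 1) ^ (2 * r - 1) ≤ ((r : ℝ) + 1) ^ (3 * (r : ℝ) ^ 2 / 2) := by
    rw [← Real.rpow_natCast, Nat.cast_sub (by lia)]
    push_cast
    gcongr
    · linarith [(Nat.cast_nonneg r : (0 : ℝ) ≤ r)]
    · nlinarith [sq_nonneg (3 * (r : ℝ) - 2)]
  have hheight : M ^ (2 * r - 1) ≤ M ^ (2 * r ^ 2 + r) :=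
    pow_le_pow_right₀ hM (by nlinarith [Nat.sub_le (2 * r) 1])
  rw [mul_pow, ← mul_assoc]
  gcongr

end Height

/-- Let `P, Q ∈ ℤ[x]` be coprime polynomials of degrees `r` and `s` respectively,
with `r ≥ max (1, s)`, and let `P(x,y) = y^r·P(x/y)`, `Q(x,y) = y^r·Q(x/y)` be the
degree-`r` homogenizations. Then for all `(a, b) ∈ ℂ²`,
`max (|P(a,b)|, |Q(a,b)|) ≥ H(a,b)^r / (2^(r²) · (r+1)^(3r²/2) · max (H(P), H(Q))^(2r² + r))`,
where `H(a,b) = max (|a|, |b|)`. -/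
theorem two_homogenized_polys_lower_bound
    (P Q : Polynomial ℤ) (r s : ℕ)
    (hP : P.natDegree = r) (hQ : Q.natDegree = s) (hr1 : 1 ≤ r) (hsr : s ≤ r)
    (hcop : ∀ g : Polynomial ℤ, g ∣ P → g ∣ Q → IsUnit g) :
    ∀ a b : ℂ,
      (max ‖a‖ ‖b‖) ^ r /
          ((2 : ℝ) ^ (r ^ 2) * ((r : ℝ) + 1) ^ (3 * (r : ℝ) ^ 2 / 2) *
            (max (polyHeight P) (polyHeight Q) : ℝ) ^ (2 * r ^ 2 + r)) ≤
        max ‖homogEvalC P r a b‖ ‖homogEvalC Q r a b‖ := by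
  subst hP hQ
  intro a b
  have hP0 : P ≠ 0 := ne_zero_of_natDegree_gt hr1
  have hM : (1 : ℝ) ≤ max (polyHeight P : ℝ) (polyHeight Q) :=
    le_max_of_le_left (by exact_mod_cast one_le_polyHeight hP0)
  rw [div_le_iff₀' (by positivity)]
  calc max ‖a‖ ‖b‖ ^ P.natDegree
      ≤ _ := max_pow_le_of_isRelPrime hcop hr1 hsr (le_max_left _ _) (le_max_right _ _) a b
    _ ≤ _ := mul_le_mul_of_nonneg_right (two_mul_mul_pow_le hr1 hM)
          (le_max_of_le_left (norm_nonneg _))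
end

section
/- Let F(x,y) = c_d x^d + c_{d−1} x^{d−1} y + ⋯ + c₀ y^d ∈ ℤ[x,y] be an irreducible binary form of degree d ≥ 3, and let α₁, …, α_d be the roots of F(x,1). Then there exists an index j ∈ {1,…,d} and integers s, t, u, v such that α_j = (vα₁ − u)/(−tα₁ + s) if and only if the matrix M = (1/√|sv − tu|)·(s u; t v) belongs to Aut′|F|; moreover, if M ∈ Aut′|F| then |sv − tu| = |F(s,t)/c_d|^{2/d}. -/
/-!
Write `F(x, y) = c ∏ (x − ρᵢ y)`, `D = sv − tu` and `ψ(z) = (vz − u) / (s − tz)`. The roots are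
irrational, so `ψ(ρ₀)` can be a root only if `D ≠ 0`. The polynomial `F(vX − u, s − tX)` is
rational: if it vanishes at one root of the irreducible `F(X, 1)`, then it vanishes at all of them,
that is, `ψ` permutes the roots. Then `F(sx + uy, tx + vy) = r F(x, y)` with
`r = ∏ (s − ρᵢ t) = F(s, t) / c`, and comparing the discriminants of the roots before and after `ψ`
gives `r² = |D| ^ d`, which is what the normalization by `√|D|` requires.

Conversely, if `F_M = ±F` then `ψ` maps zeros of `F` to zeros of `F`, and the value of `F_M` at
`(1, 0)` yields `|F(s, t)| = √|D| ^ d |c|`.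
-/

open Polynomial

/-- The binary form `F(x,y) = c_d x^d + ⋯ + c₀ y^d` associated with the integer
polynomial `f(x) = F(x,1) = ∑ cᵢ xⁱ` of degree `d`, evaluated at a complex point. -/
noncomputable def binaryFormEvalC (f : Polynomial ℤ) (d : ℕ) (x y : ℂ) : ℂ :=
  ∑ i ∈ Finset.range (d + 1), (f.coeff i : ℂ) * x ^ i * y ^ (d - i)

/-- The binary form `F` associated with `f`, evaluated at integers. -/
def binaryFormEvalZ (f : Polynomial ℤ) (d : ℕ) (x y : ℤ) : ℤ :=
  ∑ i ∈ Finset.range (d + 1), f.coeff i * x ^ i * y ^ (d - i)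

/-- Membership of the matrix `M = (1/√|sv−tu|)·(s u; t v)` in the enhanced
automorphism group `Aut′|F|` of the binary form `F` associated with `f`: the
condition `F_M = F` or `F_M = −F`, where `F_M(x,y) = F(sx + uy, tx + vy)` (with the
entries of `M` scaled by `1/√|sv−tu|`). -/
def MemEnhancedAut (f : Polynomial ℤ) (d : ℕ) (s t u v : ℤ) : Prop :=
  (∀ x y : ℂ,
    binaryFormEvalC f d
      (((Real.sqrt |((s * v - t * u : ℤ) : ℝ)|)⁻¹ : ℝ) * ((s : ℂ) * x + (u : ℂ) * y))
      (((Real.sqrt |((s * v - t * u : ℤ) : ℝ)|)⁻¹ : ℝ) * ((t : ℂ) * x + (v : ℂ) * y)) =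
      binaryFormEvalC f d x y) ∨
  (∀ x y : ℂ,
    binaryFormEvalC f d
      (((Real.sqrt |((s * v - t * u : ℤ) : ℝ)|)⁻¹ : ℝ) * ((s : ℂ) * x + (u : ℂ) * y))
      (((Real.sqrt |((s * v - t * u : ℤ) : ℝ)|)⁻¹ : ℝ) * ((t : ℂ) * x + (v : ℂ) * y)) =
      -binaryFormEvalC f d x y)

section IntegerPolynomial

variable {f : ℤ[X]}

lemma coeff_ne_zero_of_irreducible_map {d : ℕ} (hdeg : f.natDegree = d)
    (hirr : Irreducible (f.map (Int.castRingHom ℚ))) : f.coeff d ≠ 0 := by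
  rw [← hdeg, coeff_natDegree, leadingCoeff_ne_zero]
  rintro rfl
  simp at hirr

variable {L ι : Type*} [Field L] [Fintype ι] {c : L} {ρ : ι → L}

lemma aeval_eq_mul_prod_of_map_eq
    (hfact : f.map (Int.castRingHom L) = C c * ∏ i, (X - C (ρ i))) (z : L) :
    aeval z f = c * ∏ i, (z - ρ i) := by
  rw [← eval_map_algebraMap, algebraMap_int_eq, hfact]
  simp [eval_prod]

lemma aeval_eq_zero_of_map_eq
    (hfact : f.map (Int.castRingHom L) = C c * ∏ i, (X - C (ρ i))) (i : ι) :
    aeval (ρ i) f = 0 := by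
  rw [aeval_eq_mul_prod_of_map_eq hfact, Finset.prod_eq_zero (Finset.mem_univ i) (sub_self _),
    mul_zero]

variable [CharZero L]

lemma injective_of_irreducible_of_map_eq (hirr : Irreducible (f.map (Int.castRingHom ℚ)))
    (hfact : f.map (Int.castRingHom L) = C c * ∏ i, (X - C (ρ i))) :
    Function.Injective ρ := by
  have hsep : ((f.map (Int.castRingHom ℚ)).map (algebraMap ℚ L)).Separable := hirr.separable.map
  rw [map_map, RingHom.ext_int ((algebraMap ℚ L).comp _) (Int.castRingHom L), hfact] at hsep
  exact separable_prod_X_sub_C_iff.mp hsep.of_mul_right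

lemma notMem_range_ratCast_of_irreducible_map (hdeg : f.natDegree ≠ 1)
    (hirr : Irreducible (f.map (Int.castRingHom ℚ))) {α : L} (hα : aeval α f = 0) :
    α ∉ Set.range ((↑) : ℚ → L) := by
  rintro ⟨q, rfl⟩
  refine hirr.not_isRoot_of_natDegree_ne_one ?_ (x := q) ?_
  · rwa [natDegree_map_eq_of_injective (Int.castRingHom ℚ).injective_int]
  · rwa [← eq_ratCast (algebraMap ℚ L), aeval_algebraMap_apply, map_eq_zero,
      ← eval_map_algebraMap] at hα

end IntegerPolynomial

section Irrationality

variable {L : Type*} [Field L] [CharZero L] {α β : L} {s t u v : ℤ}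

lemma intCast_mul_add_intCast_eq_zero_iff (hα : α ∉ Set.range ((↑) : ℚ → L)) {a b : ℤ} :
    (a : L) * α + b = 0 ↔ a = 0 ∧ b = 0 := by
  refine ⟨fun h => ?_, by rintro ⟨rfl, rfl⟩; simp⟩
  have ha : a = 0 := by
    by_contra ha
    have ha' : (a : L) ≠ 0 := Int.cast_ne_zero.mpr ha
    refine hα ⟨-b / a, ?_⟩
    push_cast
    rw [div_eq_iff ha']
    linear_combination -h
  exact ⟨ha, by simpa [ha] using h⟩

lemma sub_mul_intCast_ne_zero (hα : α ∉ Set.range ((↑) : ℚ → L)) (hD : s * v - t * u ≠ 0) :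
    (s : L) - α * t ≠ 0 := by
  intro h
  obtain ⟨ht, hs⟩ := (intCast_mul_add_intCast_eq_zero_iff hα (a := -t) (b := s)).mp
    (by push_cast; linear_combination h)
  exact hD (by simp [hs, neg_eq_zero.mp ht])

lemma det_ne_zero_of_mul_sub_eq (hβ : β ∉ Set.range ((↑) : ℚ → L))
    (hne : (s : L) - α * t ≠ 0) (h : v * α - u = β * (s - α * t)) : s * v - t * u ≠ 0 := by
  intro hD
  have hDL : (s : L) * v - t * u = 0 := by exact_mod_cast hD
  have htv : (t : L) * β + v = 0 := by
    refine (mul_eq_zero.mp ?_).resolve_right hne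
    linear_combination -(t : L) * h + hDL
  obtain ⟨rfl, rfl⟩ := (intCast_mul_add_intCast_eq_zero_iff hβ).mp htv
  obtain ⟨rfl, -⟩ := (intCast_mul_add_intCast_eq_zero_iff hβ (a := s) (b := u)).mp
    (by push_cast at h; linear_combination -h)
  simp at hne

/-- The degenerate cases are excluded by irrationality: a vanishing denominator would make `β = 0`,
and a vanishing determinant would make `β` the ratio of two proportional linear forms. -/
lemma eq_linearFractional_iff (hα : α ∉ Set.range ((↑) : ℚ → L))
    (hβ : β ∉ Set.range ((↑) : ℚ → L)) :
    β = (v * α - u) / (-(t : L) * α + s) ↔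
      s * v - t * u ≠ 0 ∧ v * α - u = β * (s - α * t) := by
  rw [show -(t : L) * α + s = s - α * t by ring]
  constructor
  · intro h
    have hne : (s : L) - α * t ≠ 0 := fun h0 => hβ ⟨0, by simp [h, h0]⟩
    have hmul := ((eq_div_iff hne).mp h).symm
    exact ⟨det_ne_zero_of_mul_sub_eq hβ hne hmul, hmul⟩
  · rintro ⟨hD, h⟩
    rw [eq_div_iff (sub_mul_intCast_ne_zero hα hD), h]

end Irrationality

section PermutedRoots

variable {ι R : Type*} [CommRing R] {s t u v : R} {ρ : ι → R}

lemma mul_mul_sub_eq_det_mul_sub {a b a' b' : R} (ha : v * a - u = a' * (s - a * t))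
    (hb : v * b - u = b' * (s - b * t)) :
    (s - a * t) * (s - b * t) * (a' - b') = (s * v - t * u) * (a - b) := by
  linear_combination -(s - b * t) * ha + (s - a * t) * hb

lemma exists_perm_of_forall_exists [Finite ι] [IsDomain R] (hρ : Function.Injective ρ)
    (hD : s * v - t * u ≠ 0) (h : ∀ i, ∃ k, v * ρ i - u = ρ k * (s - ρ i * t)) :
    ∃ σ : Equiv.Perm ι, ∀ i, v * ρ i - u = ρ (σ i) * (s - ρ i * t) := by
  choose σ hσ using h
  have hinj : Function.Injective σ := by
    intro i k hik
    have hdet := mul_mul_sub_eq_det_mul_sub (hσ i) (hσ k)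
    rw [hik, sub_self, mul_zero] at hdet
    exact hρ (sub_eq_zero.mp ((mul_eq_zero.mp hdet.symm).resolve_left hD))
  exact ⟨.ofBijective σ hinj.bijective_of_finite, hσ⟩

variable [Fintype ι] {σ : Equiv.Perm ι}

lemma prod_offDiag_mul {M : Type*} [CommMonoid M] (w : ι → M) :
    ∏ p ∈ Finset.univ.offDiag, w p.1 * w p.2 = (∏ i, w i) ^ (2 * (Fintype.card ι - 1)) := by
  classical
  have hfst : ∏ p ∈ Finset.univ.offDiag, w p.1 = (∏ i, w i) ^ (Fintype.card ι - 1) := by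
    rw [Finset.prod_finset_product _ Finset.univ Finset.univ.erase (by simp [eq_comm])]
    simp [Finset.prod_pow]
  have hsnd : ∏ p ∈ Finset.univ.offDiag, w p.2 = (∏ i, w i) ^ (Fintype.card ι - 1) := by
    rw [Finset.prod_finset_product_right _ Finset.univ Finset.univ.erase (by simp)]
    simp [Finset.prod_pow]
  rw [Finset.prod_mul_distrib, hfst, hsnd, ← pow_add, two_mul]

lemma prod_linearSubst (hσ : ∀ i, v * ρ i - u = ρ (σ i) * (s - ρ i * t)) (x y : R) :
    ∏ i, (s * x + u * y - ρ i * (t * x + v * y)) =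
      (∏ i, (s - ρ i * t)) * ∏ i, (x - ρ i * y) := by
  rw [← Equiv.prod_comp σ fun i => x - ρ i * y, ← Finset.prod_mul_distrib]
  refine Finset.prod_congr rfl fun i _ => ?_
  linear_combination -y * hσ i

/-- The product of `mul_mul_sub_eq_det_mul_sub` over all pairs of distinct roots; the discriminant
of the roots cancels because `σ` only permutes its factors. -/
lemma prod_pow_eq_det_pow [IsDomain R] (hρ : Function.Injective ρ)
    (hσ : ∀ i, v * ρ i - u = ρ (σ i) * (s - ρ i * t)) :
    (∏ i, (s - ρ i * t)) ^ (2 * (Fintype.card ι - 1)) =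
      (s * v - t * u) ^ (Fintype.card ι * (Fintype.card ι - 1)) := by
  have hdisc : ∏ p ∈ Finset.univ.offDiag, (ρ p.1 - ρ p.2) ≠ 0 :=
    Finset.prod_ne_zero_iff.mpr fun p hp =>
      sub_ne_zero.mpr (hρ.ne (Finset.mem_offDiag.mp hp).2.2)
  have hperm : ∏ p ∈ Finset.univ.offDiag, (ρ (σ p.1) - ρ (σ p.2)) =
      ∏ p ∈ Finset.univ.offDiag, (ρ p.1 - ρ p.2) :=
    Finset.prod_equiv (σ.prodCongr σ) (by simp) (by simp)
  refine mul_right_cancel₀ hdisc ?_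
  calc
    _ = ∏ p ∈ Finset.univ.offDiag,
          (s - ρ p.1 * t) * (s - ρ p.2 * t) * (ρ (σ p.1) - ρ (σ p.2)) := by
      rw [Finset.prod_mul_distrib, hperm, prod_offDiag_mul fun i => s - ρ i * t]
    _ = ∏ p ∈ Finset.univ.offDiag, (s * v - t * u) * (ρ p.1 - ρ p.2) :=
      Finset.prod_congr rfl fun p _ => mul_mul_sub_eq_det_mul_sub (hσ p.1) (hσ p.2)
    _ = _ := by
      rw [Finset.prod_mul_distrib, Finset.prod_const, Finset.offDiag_card, Finset.card_univ,
        Nat.mul_sub_one]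

lemma norm_prod_sq_eq_norm_det_pow {K : Type*} [NormedField K] {s t u v : K} {ρ : ι → K}
    (hcard : 2 ≤ Fintype.card ι) (hρ : Function.Injective ρ)
    (hσ : ∀ i, v * ρ i - u = ρ (σ i) * (s - ρ i * t)) :
    ‖∏ i, (s - ρ i * t)‖ ^ 2 = ‖s * v - t * u‖ ^ Fintype.card ι := by
  refine (pow_left_inj₀ (by positivity) (by positivity) (n := Fintype.card ι - 1) (by omega)).mp ?_
  rw [← pow_mul, ← pow_mul, ← norm_pow, ← norm_pow, prod_pow_eq_det_pow hρ hσ]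

end PermutedRoots

section BinaryForm

variable {f : ℤ[X]} {d : ℕ}

lemma binaryFormEvalC_mul_mul (r x y : ℂ) :
    binaryFormEvalC f d (r * x) (r * y) = r ^ d * binaryFormEvalC f d x y := by
  rw [binaryFormEvalC, binaryFormEvalC, Finset.mul_sum]
  refine Finset.sum_congr rfl fun i hi => ?_
  rw [← pow_mul_pow_sub r (Finset.mem_range_succ_iff.mp hi)]
  ring

lemma binaryFormEvalC_zero_right (x : ℂ) : binaryFormEvalC f d x 0 = f.coeff d * x ^ d := by
  rw [binaryFormEvalC, Finset.sum_range_succ, Finset.sum_eq_zero, zero_add, Nat.sub_self, pow_zero,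
    mul_one]
  intro i hi
  rw [zero_pow (Nat.sub_ne_zero_of_lt (Finset.mem_range.mp hi)), mul_zero]

lemma binaryFormEvalC_one_right (hf : f.natDegree ≤ d) (x : ℂ) :
    binaryFormEvalC f d x 1 = aeval x f := by
  simp [binaryFormEvalC, aeval_eq_sum_range' (Nat.lt_succ_of_le hf)]

lemma binaryFormEvalC_intCast (s t : ℤ) :
    binaryFormEvalC f d s t = (binaryFormEvalZ f d s t : ℂ) := by
  simp [binaryFormEvalC, binaryFormEvalZ]

variable (f d) in
/-- The polynomial `F(p, q)` obtained by substituting two integer polynomials into the binary form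
`F` associated with `f`. -/
noncomputable def binaryFormComp (p q : ℤ[X]) : ℤ[X] :=
  ∑ i ∈ Finset.range (d + 1), C (f.coeff i) * p ^ i * q ^ (d - i)

lemma aeval_binaryFormComp (p q : ℤ[X]) (z : ℂ) :
    aeval z (binaryFormComp f d p q) = binaryFormEvalC f d (aeval z p) (aeval z q) := by
  simp [binaryFormComp, binaryFormEvalC]

variable {s t u v : ℤ}

lemma binaryFormEvalC_adjugate_eq_zero_of_conj (hirr : Irreducible (f.map (Int.castRingHom ℚ)))
    {α β : ℂ} (hα : aeval α f = 0) (hβ : aeval β f = 0)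
    (h : binaryFormEvalC f d (v * α - u) (s - α * t) = 0) :
    binaryFormEvalC f d (v * β - u) (s - β * t) = 0 := by
  set g : ℤ[X] := binaryFormComp f d (C v * X - C u) (C s - X * C t) with hg
  have hg_eval (z : ℂ) :
      aeval z (g.map (algebraMap ℤ ℚ)) = binaryFormEvalC f d (v * z - u) (s - z * t) := by
    rw [aeval_map_algebraMap, hg, aeval_binaryFormComp]
    simp
  rw [← aeval_map_algebraMap ℚ] at hα hβ
  rw [← hg_eval] at h ⊢
  exact (hirr.dvd_iff_aeval_eq_zero hβ).mpr ((hirr.dvd_iff_aeval_eq_zero hα).mp h)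

lemma binaryFormEvalC_eq_mul_prod {ρ : Fin d → ℂ} (hf : f.natDegree ≤ d)
    (hfact : f.map (Int.castRingHom ℂ) = C (f.coeff d : ℂ) * ∏ i, (X - C (ρ i))) (x y : ℂ) :
    binaryFormEvalC f d x y = f.coeff d * ∏ i, (x - ρ i * y) := by
  obtain rfl | hy := eq_or_ne y 0
  · simp [binaryFormEvalC_zero_right]
  calc
    binaryFormEvalC f d x y = binaryFormEvalC f d (y * (x / y)) (y * 1) := by
      rw [mul_div_cancel₀ x hy, mul_one]
    _ = f.coeff d * (y ^ d * ∏ i, (x / y - ρ i)) := by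
      rw [binaryFormEvalC_mul_mul, binaryFormEvalC_one_right hf, aeval_eq_mul_prod_of_map_eq hfact]
      ring
    _ = f.coeff d * ∏ i, y * (x / y - ρ i) := by
      rw [Finset.prod_mul_distrib, Fin.prod_const]
    _ = f.coeff d * ∏ i, (x - ρ i * y) := by
      simp only [mul_sub, mul_div_cancel₀ x hy, mul_comm y (ρ _)]

lemma binaryFormEvalC_eq_zero_iff {ι : Type*} [Fintype ι] {ρ : ι → ℂ} (hc : f.coeff d ≠ 0)
    (hF : ∀ x y, binaryFormEvalC f d x y = f.coeff d * ∏ i, (x - ρ i * y)) {x y : ℂ} :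
    binaryFormEvalC f d x y = 0 ↔ ∃ i, x = ρ i * y := by
  simp [hF, hc, Finset.prod_eq_zero_iff, sub_eq_zero]

lemma memEnhancedAut_iff (hD : s * v - t * u ≠ 0) :
    MemEnhancedAut f d s t u v ↔
      ∃ r : ℝ, r ^ 2 = |((s * v - t * u : ℤ) : ℝ)| ^ d ∧ ∀ x y : ℂ,
        binaryFormEvalC f d (s * x + u * y) (t * x + v * y) = r * binaryFormEvalC f d x y := by
  simp only [MemEnhancedAut, binaryFormEvalC_mul_mul]
  set q : ℝ := √|((s * v - t * u : ℤ) : ℝ)| with hq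
  have hq0 : q ≠ 0 := (Real.sqrt_pos.mpr (abs_pos.mpr (Int.cast_ne_zero.mpr hD))).ne'
  have hq_sq : |((s * v - t * u : ℤ) : ℝ)| ^ d = (q ^ d) ^ 2 := by
    rw [← Real.sq_sqrt (abs_nonneg ((s * v - t * u : ℤ) : ℝ)), ← hq, pow_right_comm]
  have hscale (a b : ℂ) : ((q⁻¹ : ℝ) : ℂ) ^ d * a = b ↔ a = ((q ^ d : ℝ) : ℂ) * b := by
    push_cast
    rw [inv_pow, inv_mul_eq_iff_eq_mul₀ (pow_ne_zero d (Complex.ofReal_ne_zero.mpr hq0))]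
  simp only [hscale, hq_sq, sq_eq_sq_iff_eq_or_eq_neg, or_and_right, exists_or, exists_eq_left]
  simp only [Complex.ofReal_neg, neg_mul, mul_neg]

namespace MemEnhancedAut

/-- If `sv − tu = 0`, the scaling factor is the junk value `0⁻¹ = 0`, so that `F_M = 0`. -/
lemma det_ne_zero (hd : d ≠ 0) (hc : f.coeff d ≠ 0) (h : MemEnhancedAut f d s t u v) :
    s * v - t * u ≠ 0 := by
  intro hD
  have hF : binaryFormEvalC f d 1 0 = 0 := by
    rcases h with h | h <;> simpa [hD, binaryFormEvalC_zero_right, hd, eq_comm] using h 1 0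
  simp [binaryFormEvalC_zero_right, hc] at hF

lemma abs_det_eq (hd : d ≠ 0) (hc : f.coeff d ≠ 0) (h : MemEnhancedAut f d s t u v) :
    |((s * v - t * u : ℤ) : ℝ)| =
      |(binaryFormEvalZ f d s t : ℝ) / (f.coeff d : ℝ)| ^ (2 / (d : ℝ)) := by
  obtain ⟨r, hr, hF⟩ := (memEnhancedAut_iff (h.det_ne_zero hd hc)).mp h
  have hst : (binaryFormEvalZ f d s t : ℝ) = r * f.coeff d := by
    have h10 := hF 1 0
    simp only [mul_one, mul_zero, add_zero, binaryFormEvalC_intCast, binaryFormEvalC_zero_right,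
      one_pow] at h10
    exact_mod_cast h10
  rw [hst, mul_div_cancel_right₀ r (Int.cast_ne_zero.mpr hc), div_eq_mul_inv,
    Real.rpow_mul (abs_nonneg r), Real.rpow_two, sq_abs, hr,
    Real.pow_rpow_inv_natCast (abs_nonneg _) hd]

/-- The matrix maps `(vα − u, s − tα)` to `(sv − tu) · (α, 1)`. -/
lemma binaryFormEvalC_adjugate_eq_zero (hD : s * v - t * u ≠ 0) (h : MemEnhancedAut f d s t u v)
    {α : ℂ} (hα : binaryFormEvalC f d α 1 = 0) :
    binaryFormEvalC f d (v * α - u) (s - α * t) = 0 := by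
  obtain ⟨r, hr, hF⟩ := (memEnhancedAut_iff hD).mp h
  have hr0 : r ≠ 0 := by
    rw [← pow_ne_zero_iff two_ne_zero, hr]
    exact pow_ne_zero d (abs_ne_zero.mpr (Int.cast_ne_zero.mpr hD))
  have hα' := hF (v * α - u) (s - α * t)
  rw [show s * (v * α - u) + u * (s - α * t) = (s * v - t * u) * α by ring,
    show t * (v * α - u) + v * (s - α * t) = (s * v - t * u) * 1 by ring,
    binaryFormEvalC_mul_mul, hα, mul_zero] at hα'
  exact (mul_eq_zero.mp hα'.symm).resolve_left (Complex.ofReal_ne_zero.mpr hr0)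

end MemEnhancedAut

variable {ρ : Fin d → ℂ}

lemma memEnhancedAut_of_forall_exists (hd : 2 ≤ d) (hc : f.coeff d ≠ 0)
    (hF : ∀ x y, binaryFormEvalC f d x y = f.coeff d * ∏ i, (x - ρ i * y))
    (hρ : Function.Injective ρ) (hD : s * v - t * u ≠ 0)
    (h : ∀ i, ∃ k, v * ρ i - u = ρ k * (s - ρ i * t)) : MemEnhancedAut f d s t u v := by
  obtain ⟨σ, hσ⟩ := exists_perm_of_forall_exists hρ (by exact_mod_cast hD) h
  have hr : ((binaryFormEvalZ f d s t / f.coeff d : ℝ) : ℂ) = ∏ i, (s - ρ i * t) := by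
    push_cast
    rw [← binaryFormEvalC_intCast, hF, mul_div_cancel_left₀ _ (Int.cast_ne_zero.mpr hc)]
  refine (memEnhancedAut_iff hD).mpr ⟨binaryFormEvalZ f d s t / f.coeff d, ?_, fun x y => ?_⟩
  · have hnorm := norm_prod_sq_eq_norm_det_pow (by simpa using hd) hρ hσ
    rw [← hr, Complex.norm_real, Real.norm_eq_abs, sq_abs, Fintype.card_fin] at hnorm
    rw [hnorm, ← Complex.norm_intCast]
    push_cast
    rfl
  · rw [hF, hF, hr, prod_linearSubst hσ]
    ring

lemma memEnhancedAut_iff_exists_root (hd : 2 ≤ d) (hdeg : f.natDegree = d)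
    (hirr : Irreducible (f.map (Int.castRingHom ℚ)))
    (hfact : f.map (Int.castRingHom ℂ) = C (f.coeff d : ℂ) * ∏ i, (X - C (ρ i))) (o : Fin d) :
    MemEnhancedAut f d s t u v ↔
      s * v - t * u ≠ 0 ∧ ∃ j, v * ρ o - u = ρ j * (s - ρ o * t) := by
  have hc : f.coeff d ≠ 0 := coeff_ne_zero_of_irreducible_map hdeg hirr
  have hF := binaryFormEvalC_eq_mul_prod hdeg.le hfact
  have hroot := aeval_eq_zero_of_map_eq hfact
  rw [← binaryFormEvalC_eq_zero_iff hc hF]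
  constructor
  · intro h
    have hD := h.det_ne_zero (by omega) hc
    refine ⟨hD, h.binaryFormEvalC_adjugate_eq_zero hD ?_⟩
    rw [binaryFormEvalC_one_right hdeg.le, hroot]
  · rintro ⟨hD, ho⟩
    refine memEnhancedAut_of_forall_exists hd hc hF
      (injective_of_irreducible_of_map_eq hirr hfact) hD fun i => ?_
    rw [← binaryFormEvalC_eq_zero_iff hc hF]
    exact binaryFormEvalC_adjugate_eq_zero_of_conj hirr (hroot o) (hroot i) ho

end BinaryForm

theorem enhanced_automorphisms_and_roots_general
    (d : ℕ) (hd : 2 ≤ d) (f : ℤ[X]) (hdeg : f.natDegree = d)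
    (hirr : Irreducible (f.map (Int.castRingHom ℚ)))
    (ρ : Fin d → ℂ)
    (hfact : f.map (Int.castRingHom ℂ) = C (f.coeff d : ℂ) * ∏ i, (X - C (ρ i)))
    (o : Fin d) (s t u v : ℤ) :
    ((∃ j, ρ j = (v * ρ o - u) / (-(t : ℂ) * ρ o + s)) ↔ MemEnhancedAut f d s t u v) ∧
    (MemEnhancedAut f d s t u v →
      |((s * v - t * u : ℤ) : ℝ)| =
        |(binaryFormEvalZ f d s t : ℝ) / (f.coeff d : ℝ)| ^ (2 / (d : ℝ))) := by
  have hirrat (i : Fin d) : ρ i ∉ Set.range ((↑) : ℚ → ℂ) :=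
    notMem_range_ratCast_of_irreducible_map (by omega) hirr (aeval_eq_zero_of_map_eq hfact i)
  constructor
  · simp only [eq_linearFractional_iff (hirrat o) (hirrat _), exists_and_left]
    exact (memEnhancedAut_iff_exists_root hd hdeg hirr hfact o).symm
  · exact MemEnhancedAut.abs_det_eq (by omega) (coeff_ne_zero_of_irreducible_map hdeg hirr)

/-- Let `F(x,y) = c_d x^d + ⋯ + c₀ y^d ∈ ℤ[x,y]` be an irreducible binary form of
degree `d ≥ 3`, and let `ρ 0, …, ρ (d-1)` be the roots of `F(x,1)`. Then for integers
`s, t, u, v`, there exists an index `j` such that `ρ j = (v·ρ 0 − u)/(−t·ρ 0 + s)` if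
and only if the matrix `M = (1/√|sv − tu|)·(s u; t v)` belongs to `Aut′|F|`;
moreover, if `M ∈ Aut′|F|` then `|sv − tu| = |F(s,t)/c_d|^(2/d)`. -/
theorem enhanced_automorphisms_and_roots
    (d : ℕ) (hd : 3 ≤ d) (f : Polynomial ℤ) (hdeg : f.natDegree = d)
    (hirr : Irreducible (f.map (Int.castRingHom ℚ)))
    (ρ : Fin d → ℂ)
    (hfact : f.map (Int.castRingHom ℂ) =
      Polynomial.C ((f.coeff d : ℤ) : ℂ) * ∏ i : Fin d, (Polynomial.X - Polynomial.C (ρ i)))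
    (s t u v : ℤ) :
    ((∃ j : Fin d,
        ρ j = ((v : ℂ) * ρ ⟨0, by omega⟩ - (u : ℂ)) / (-(t : ℂ) * ρ ⟨0, by omega⟩ + (s : ℂ))) ↔
      MemEnhancedAut f d s t u v) ∧
    (MemEnhancedAut f d s t u v →
      (|(s * v - t * u : ℤ)| : ℝ) =
        |((binaryFormEvalZ f d s t : ℤ) : ℝ) / ((f.coeff d : ℤ) : ℝ)| ^ (2 / (d : ℝ))) := by
  exact enhanced_automorphisms_and_roots_general d (by omega) f hdeg hirr ρ hfact _ s t u v
end
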